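/- Let N ≥ 1 and n ≥ 2 be integers. Let A be an N×N matrix over ℂ((t)) with A.coeff m = 0 for all m < −n and with A.coeff(−n) a non-nilpotent complex matrix. Let λ : Fin N → ℤ and let g be the diagonal matrix over ℂ((t)) with diagonal entries t^{λ i}. Then the gauge transform B = g·A·g⁻¹ − g′·g⁻¹ (whose entries are B i j = t^{λ i − λ j}·(A i j) − δ_{ij}·λ i·t^{−1}) has order of singularity at least n; that is, there exist m ≤ −n and indices i, j with (B i j).coeff m ≠ 0. (This is the key reduction step, to gauge transformation by a coweight t^λ, in the proof of the paper's Lemma 'order of singularity'.) -/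

import Mathlib

/-!
Conjugation by `t^λ` multiplies the `(i, j)` entry of `A` by `t ^ (λ i - λ j)`, so a coefficient at
`-n` with `λ i ≤ λ j` is moved to exponent at most `-n`. The derivative term of the gauge
transformation lives at `t⁻¹` on the diagonal, where nothing is moved, so it cannot cancel such a
coefficient when `n ≠ 1`. If all of these coefficients vanished, the polar part `A.coeff (-n)` would
be strictly triangular for the ordering of the indices by `λ`, hence nilpotent.
-/

open scoped Classical

/-- The formal derivative of a formal Laurent series: `f′.coeff m = (m+1) • f.coeff (m+1)`. -/
noncomputable def lderiv (f : LaurentSeries ℂ) : LaurentSeries ℂ where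
  coeff m := ((m + 1 : ℤ) : ℂ) * f.coeff (m + 1)
  isPWO_support' := by
    have h : (Function.support fun m : ℤ => ((m + 1 : ℤ) : ℂ) * f.coeff (m + 1)) ⊆
        (fun m : ℤ => m - 1) '' f.support := by
      intro m hm
      have : f.coeff (m + 1) ≠ 0 := by
        intro h0
        apply hm
        simp [Function.mem_support, h0]
      exact ⟨m + 1, this, by ring⟩
    exact (f.isPWO_support.image_of_monotone fun a b hab => by omega).mono h

/-- The matrix of `m`-th coefficients of a matrix of Laurent series. -/
noncomputable def mcoeff {N : ℕ} (A : Matrix (Fin N) (Fin N) (LaurentSeries ℂ)) (m : ℤ) :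
    Matrix (Fin N) (Fin N) ℂ :=
  Matrix.of fun i j => (A i j).coeff m

/-- Entrywise formal derivative of a matrix of Laurent series. -/
noncomputable def mderiv {N : ℕ} (A : Matrix (Fin N) (Fin N) (LaurentSeries ℂ)) :
    Matrix (Fin N) (Fin N) (LaurentSeries ℂ) :=
  A.map lderiv

section StrictlyTriangular

variable {ι R : Type*} [Fintype ι] [DecidableEq ι] [Semiring R] {M : Matrix ι ι R}

theorem add_le_of_matrix_pow_apply_ne_zero {d : ι → ℕ} (hM : ∀ i j, M i j ≠ 0 → d j < d i)
    {k : ℕ} {i j : ι} (h : (M ^ k) i j ≠ 0) : d j + k ≤ d i := by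
  induction k generalizing j with
  | zero =>
    obtain rfl : i = j := by
      by_contra hij
      exact h (by rw [pow_zero, Matrix.one_apply_ne hij])
    exact le_rfl
  | succ k ih =>
    rw [pow_succ, Matrix.mul_apply] at h
    obtain ⟨l, -, hl⟩ := Finset.exists_ne_zero_of_sum_ne_zero h
    have hil : d l + k ≤ d i := ih (left_ne_zero_of_mul hl)
    have hlj : d j < d l := hM l j (right_ne_zero_of_mul hl)
    omega

theorem matrix_pow_card_eq_zero_of_strictlyTriangular {α : Type*} [Preorder α] {b : ι → α}
    (hM : ∀ i j, M i j ≠ 0 → b j < b i) : M ^ Fintype.card ι = 0 := by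
  -- Replacing `b i` by the number of indices strictly below it makes the grading bounded.
  let d : ι → ℕ := fun i => Finset.card {l | b l < b i}
  have hd_lt : ∀ i, d i < Fintype.card ι := fun i =>
    Finset.card_lt_univ_of_notMem (x := i) (by simp)
  have hd_mono : ∀ i j, b j < b i → d j < d i := fun i j hji =>
    Finset.card_lt_card <| Finset.ssubset_iff_of_subset
      (Finset.monotone_filter_right _ fun _ _ hl => hl.trans hji) |>.mpr ⟨j, by simp [hji]⟩
  ext i j
  by_contra h
  have h_le : d j + Fintype.card ι ≤ d i :=
    add_le_of_matrix_pow_apply_ne_zero (fun i j hij => hd_mono i j (hM i j hij)) h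
  exact (hd_lt i).not_ge (le_of_add_le_right h_le)

end StrictlyTriangular

section Coweight

variable {ι Γ R : Type*} [DecidableEq ι]

/-- The coweight `t^λ`: the diagonal matrix with entries `t ^ λ i`, over Hahn series with exponents
in an arbitrary `Γ`; the exponent group of Laurent series is `Γ = ℤ`. -/
noncomputable def coweight [PartialOrder Γ] [Zero R] [One R] (lam : ι → Γ) :
    Matrix ι ι (HahnSeries Γ R) :=
  Matrix.diagonal fun i => HahnSeries.single (lam i) 1

variable [Fintype ι] [AddCommGroup Γ] [PartialOrder Γ] [IsOrderedAddMonoid Γ] [CommRing R]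

theorem inv_coweight (lam : ι → Γ) :
    (coweight lam : Matrix ι ι (HahnSeries Γ R))⁻¹ = coweight (-lam) := by
  apply Matrix.inv_eq_right_inv
  simp [coweight, HahnSeries.single_mul_single]

theorem coweight_mul_mul_inv_apply (lam : ι → Γ) (A : Matrix ι ι (HahnSeries Γ R)) (i j : ι) :
    (coweight lam * A * (coweight lam)⁻¹ : Matrix ι ι (HahnSeries Γ R)) i j =
      HahnSeries.single (lam i - lam j) 1 * A i j := by
  rw [inv_coweight, coweight, coweight, Matrix.mul_diagonal, Matrix.diagonal_mul, mul_right_comm,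
    HahnSeries.single_mul_single, mul_one, Pi.neg_apply, ← sub_eq_add_neg]

end Coweight

section Gauge

theorem lderiv_single (a : ℤ) (c : ℂ) :
    lderiv (HahnSeries.single a c) = HahnSeries.single (a - 1) (a * c) := by
  ext m
  change ((m + 1 : ℤ) : ℂ) * (HahnSeries.single a c).coeff (m + 1) = _
  obtain rfl | hm := eq_or_ne m (a - 1)
  · simp
  · rw [HahnSeries.coeff_single_of_ne hm, HahnSeries.coeff_single_of_ne (by omega), mul_zero]

variable {N : ℕ}

theorem mderiv_diagonal (v : Fin N → LaurentSeries ℂ) :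
    mderiv (Matrix.diagonal v) = Matrix.diagonal fun i => lderiv (v i) :=
  Matrix.diagonal_map (by ext m; exact mul_zero _)

theorem mderiv_coweight_mul_inv (lam : Fin N → ℤ) :
    mderiv (coweight lam) * (coweight lam)⁻¹ =
      Matrix.diagonal fun i => HahnSeries.single (-1) (lam i : ℂ) := by
  rw [inv_coweight, coweight, coweight, mderiv_diagonal, Matrix.diagonal_mul_diagonal]
  congr 1 with i : 1
  rw [lderiv_single, HahnSeries.single_mul_single, mul_one, mul_one, Pi.neg_apply]
  congr 2
  ring

/-- The connection matrix of the gauge transform of `∂_t + A` by `g`. It is meaningful only for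
invertible `g`, since `g⁻¹` is `0` otherwise. -/
noncomputable def gaugeTransform (g A : Matrix (Fin N) (Fin N) (LaurentSeries ℂ)) :
    Matrix (Fin N) (Fin N) (LaurentSeries ℂ) :=
  g * A * g⁻¹ - mderiv g * g⁻¹

theorem gaugeTransform_coweight_apply (lam : Fin N → ℤ)
    (A : Matrix (Fin N) (Fin N) (LaurentSeries ℂ)) (i j : Fin N) :
    gaugeTransform (coweight lam) A i j = HahnSeries.single (lam i - lam j) 1 * A i j -
      Matrix.diagonal (fun i => HahnSeries.single (-1) (lam i : ℂ)) i j := by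
  rw [gaugeTransform, mderiv_coweight_mul_inv, Matrix.sub_apply, coweight_mul_mul_inv_apply]

theorem coeff_gaugeTransform_coweight_apply (lam : Fin N → ℤ)
    (A : Matrix (Fin N) (Fin N) (LaurentSeries ℂ)) {i j : Fin N} {m : ℤ} (hm : i = j → m ≠ -1) :
    (gaugeTransform (coweight lam) A i j).coeff (m + (lam i - lam j)) = mcoeff A m i j := by
  have h_deriv : (Matrix.diagonal (fun i => HahnSeries.single (-1) (lam i : ℂ)) i j).coeff
      (m + (lam i - lam j)) = 0 := by
    obtain rfl | hij := eq_or_ne i j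
    · rw [Matrix.diagonal_apply_eq, sub_self, add_zero, HahnSeries.coeff_single_of_ne (hm rfl)]
    · rw [Matrix.diagonal_apply_ne _ hij, HahnSeries.coeff_zero]
  rw [gaugeTransform_coweight_apply, HahnSeries.coeff_sub, h_deriv, sub_zero,
    HahnSeries.coeff_single_mul_add, one_mul, mcoeff, Matrix.of_apply]

theorem gauge_by_coweight_order_of_singularity_general {n : ℤ} (hn : n ≠ 1)
    {A : Matrix (Fin N) (Fin N) (LaurentSeries ℂ)} (hA : ¬ IsNilpotent (mcoeff A (-n)))
    (lam : Fin N → ℤ) :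
    ∃ m : ℤ, m ≤ -n ∧ ∃ i j : Fin N, (gaugeTransform (coweight lam) A i j).coeff m ≠ 0 := by
  obtain ⟨i, j, hij, h_le⟩ : ∃ i j, mcoeff A (-n) i j ≠ 0 ∧ lam i ≤ lam j := by
    by_contra! h_lt
    exact hA ⟨_, matrix_pow_card_eq_zero_of_strictlyTriangular h_lt⟩
  refine ⟨-n + (lam i - lam j), by omega, i, j, ?_⟩
  rwa [coeff_gaugeTransform_coweight_apply lam A fun _ => by omega]

end Gauge

/-- Gauge transformation by a coweight `t^λ` cannot lower the order of singularity
of an operator of order `n ≥ 2` with non-nilpotent polar part. -/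
theorem gauge_by_coweight_order_of_singularity
    (N : ℕ) (hN : 1 ≤ N) (n : ℤ) (hn : 2 ≤ n)
    (A : Matrix (Fin N) (Fin N) (LaurentSeries ℂ))
    (hA : ∀ m : ℤ, m < -n → mcoeff A m = 0)
    (hnonnilp : ¬ IsNilpotent (mcoeff A (-n)))
    (lam : Fin N → ℤ)
    (g : Matrix (Fin N) (Fin N) (LaurentSeries ℂ))
    (hg : g = Matrix.diagonal fun i => (HahnSeries.single (lam i) (1 : ℂ) : LaurentSeries ℂ))
    (B : Matrix (Fin N) (Fin N) (LaurentSeries ℂ))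
    (hB : B = g * A * g⁻¹ - (mderiv g) * g⁻¹) :
    ∃ m : ℤ, m ≤ -n ∧ ∃ i j : Fin N, (B i j).coeff m ≠ 0 := by
  subst hg hB
  exact gauge_by_coweight_order_of_singularity_general (by omega) hnonnilp lam
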